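/- Let p be an odd prime, S a commutative ring of characteristic p, and R = S[T, T₁₁, T₁₂, T₂₂] the polynomial ring in four variables. For ij ∈ {11, 12, 22} let D_ij : R → R be the S-linear operator D_ij(f) = (T_ij + 1)·∂f/∂T_ij. Let Θ := 4·(D₁₁ ∘ D₂₂) − D₁₂ ∘ D₁₂. Then the p-fold composite of Θ equals Θ, i.e. Θ^p = Θ as S-linear endomorphisms of R. -/

import Mathlib

open MvPolynomial

/-- The operator `D_ij : f ↦ (T_ij + 1)·∂f/∂T_ij` on `S[T, T₁₁, T₁₂, T₂₂]`,
with the variables indexed by `Fin 4` as `0 ↦ T`, `1 ↦ T₁₁`, `2 ↦ T₁₂`, `3 ↦ T₂₂`. -/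
noncomputable def Dij {S : Type*} [CommRing S] (i : Fin 4) (f : MvPolynomial (Fin 4) S) :
    MvPolynomial (Fin 4) S :=
  (X i + 1) * pderiv i f

/-- `Θ₁ f = T²·D₁₁ f − T·D₁₂ f + D₂₂ f`. -/
noncomputable def Theta1 {S : Type*} [CommRing S] (f : MvPolynomial (Fin 4) S) :
    MvPolynomial (Fin 4) S :=
  X 0 ^ 2 * Dij 1 f - X 0 * Dij 2 f + Dij 3 f

/-- `Θ₂ f = 2T^{p+1}·D₁₁ f − (T + T^p)·D₁₂ f + 2·D₂₂ f`. -/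
noncomputable def Theta2 {S : Type*} [CommRing S] (p : ℕ) (f : MvPolynomial (Fin 4) S) :
    MvPolynomial (Fin 4) S :=
  2 * X 0 ^ (p + 1) * Dij 1 f - (X 0 + X 0 ^ p) * Dij 2 f + 2 * Dij 3 f

/-- `Θ₃ f = T^{2p}·D₁₁ f − T^p·D₁₂ f + D₂₂ f`. -/
noncomputable def Theta3 {S : Type*} [CommRing S] (p : ℕ) (f : MvPolynomial (Fin 4) S) :
    MvPolynomial (Fin 4) S :=
  X 0 ^ (2 * p) * Dij 1 f - X 0 ^ p * Dij 2 f + Dij 3 f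

/-- `θ₄⁽ᴺ⁾ f = (T − T^p)·∂f/∂T + N·f`. -/
noncomputable def theta4 {S : Type*} [CommRing S] (p : ℕ) (N : ℤ) (f : MvPolynomial (Fin 4) S) :
    MvPolynomial (Fin 4) S :=
  (X 0 - X 0 ^ p) * pderiv 0 f + (N : MvPolynomial (Fin 4) S) * f

/-!
The products of the elements `X j + 1` span the polynomial ring and are common eigenvectors of all
the `D_ij`, hence of `Θ`. The eigenvalues are integers `n`, so `n ^ p = n` in characteristic `p` by
Fermat's little theorem.
-/

section IntegerEigenvalues

variable {R M : Type*} [AddCommGroup M]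

/-- The ring of endomorphisms that multiply the fixed vector `v` by some integer, that is,
have it as an eigenvector with integer eigenvalue; unlike for eigenvectors, `v = 0` is allowed. -/
def intEigenvalueSubring (R : Type*) [Semiring R] [Module R M] (v : M) :
    Subring (Module.End R M) where
  carrier := {T | ∃ n : ℤ, T v = n • v}
  zero_mem' := ⟨0, by simp⟩
  one_mem' := ⟨1, by simp⟩
  add_mem' := by
    rintro T U ⟨m, hT⟩ ⟨n, hU⟩
    exact ⟨m + n, by rw [LinearMap.add_apply, hT, hU, add_smul]⟩
  neg_mem' := by
    rintro T ⟨n, hT⟩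
    exact ⟨-n, by rw [LinearMap.neg_apply, hT, neg_smul]⟩
  mul_mem' := by
    rintro T U ⟨m, hT⟩ ⟨n, hU⟩
    exact ⟨n * m, by rw [Module.End.mul_apply, hU, map_zsmul, hT, mul_smul]⟩

theorem pow_apply_of_apply_eq_zsmul [Semiring R] [Module R M] {T : Module.End R M} {v : M} {n : ℤ}
    (hT : T v = n • v) (k : ℕ) : (T ^ k) v = n ^ k • v := by
  induction k with
  | zero => simp
  | succ k ih => rw [pow_succ', Module.End.mul_apply, ih, map_zsmul, hT, pow_succ, mul_smul]

theorem intCast_pow_char (R : Type*) [Ring R] {p : ℕ} (hp : p.Prime) [CharP R p] (n : ℤ) :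
    (n : R) ^ p = n := by
  rw [← Int.cast_pow, CharP.intCast_eq_intCast R p]
  exact Int.ModEq.pow_prime_eq_self hp n

theorem pow_char_eq_self_of_span_eq_top [Ring R] [Module R M] {p : ℕ} (hp : p.Prime) [CharP R p]
    {B : Set M} (hB : Submodule.span R B = ⊤) {T : Module.End R M}
    (hT : ∀ v ∈ B, T ∈ intEigenvalueSubring R v) : T ^ p = T := by
  refine LinearMap.ext_on hB fun v hv => ?_
  obtain ⟨n, hn⟩ := hT v hv
  calc (T ^ p) v = ((n : R) ^ p) • v := by
        rw [pow_apply_of_apply_eq_zsmul hn, ← Int.cast_pow, Int.cast_smul_eq_zsmul]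
    _ = T v := by rw [intCast_pow_char R hp, Int.cast_smul_eq_zsmul, hn]

end IntegerEigenvalues

theorem derivation_mem_intEigenvalueSubring_of_mem_closure {R A : Type*} [CommSemiring R]
    [CommRing A] [Algebra R A] (D : Derivation R A A) {s : Set A}
    (hs : ∀ u ∈ s, D.toLinearMap ∈ intEigenvalueSubring R u) {v : A}
    (hv : v ∈ Submonoid.closure s) : D.toLinearMap ∈ intEigenvalueSubring R v := by
  induction hv using Submonoid.closure_induction with
  | mem u hu => exact hs u hu
  | one => exact ⟨0, by simp⟩
  | mul u v _ _ hu hv =>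
    obtain ⟨m, hm : D u = m • u⟩ := hu
    obtain ⟨n, hn : D v = n • v⟩ := hv
    refine ⟨m + n, ?_⟩
    calc D (u * v) = u • D v + v • D u := D.leibniz u v
      _ = (m + n) • (u * v) := by
        rw [hm, hn]
        simp only [smul_eq_mul, zsmul_eq_mul, Int.cast_add]
        ring

section ShiftedEuler

variable {σ S : Type*} [CommRing S]

/-- The Euler operator `(X i + 1) ∂/∂X i` centred at `-1`, as a derivation: the operator `Dij`
for an arbitrary set of variables. -/
noncomputable def shiftedEuler (S : Type*) [CommRing S] (i : σ) :
    Derivation S (MvPolynomial σ S) (MvPolynomial σ S) :=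
  (X i + 1 : MvPolynomial σ S) • pderiv i

theorem shiftedEuler_X_add_one [DecidableEq σ] (i j : σ) :
    shiftedEuler S i (X j + 1) = if i = j then X j + 1 else 0 := by
  by_cases h : i = j
  · subst h
    simp [shiftedEuler]
  · simp [shiftedEuler, h, pderiv_X_of_ne (Ne.symm h)]

theorem adjoin_range_X_add_one :
    Algebra.adjoin S (Set.range fun j : σ => (X j + 1 : MvPolynomial σ S)) = ⊤ := by
  rw [eq_top_iff, ← adjoin_range_X, Algebra.adjoin_le_iff]
  rintro _ ⟨j, rfl⟩
  rw [← add_sub_cancel_right (X j) 1]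
  exact sub_mem (Algebra.subset_adjoin ⟨j, rfl⟩) (one_mem _)

theorem span_closure_range_X_add_one :
    Submodule.span S (Submonoid.closure
      (Set.range fun j : σ => (X j + 1 : MvPolynomial σ S)) : Set (MvPolynomial σ S)) = ⊤ := by
  rw [← Algebra.adjoin_eq_span, adjoin_range_X_add_one, Algebra.top_toSubmodule]

theorem shiftedEuler_mem_intEigenvalueSubring (i : σ) {v : MvPolynomial σ S}
    (hv : v ∈ Submonoid.closure (Set.range fun j : σ => (X j + 1 : MvPolynomial σ S))) :
    (shiftedEuler S i).toLinearMap ∈ intEigenvalueSubring S v := by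
  classical
  refine derivation_mem_intEigenvalueSubring_of_mem_closure _ ?_ hv
  rintro _ ⟨j, rfl⟩
  refine ⟨if i = j then 1 else 0, (shiftedEuler_X_add_one i j).trans ?_⟩
  simp only [ite_smul, one_smul, zero_smul]

theorem stmt_16_general {p : ℕ} (hp : p.Prime) [CharP S p]
    {T : Module.End S (MvPolynomial σ S)}
    (hT : T ∈ Subring.closure (Set.range fun i : σ => (shiftedEuler S i).toLinearMap)) :
    T ^ p = T := by
  refine pow_char_eq_self_of_span_eq_top hp span_closure_range_X_add_one fun v hv => ?_
  refine Subring.closure_le.mpr ?_ hT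
  rintro _ ⟨i, rfl⟩
  exact shiftedEuler_mem_intEigenvalueSubring i hv

end ShiftedEuler

section Theta

variable (S : Type*) [CommRing S]

/-- The operator `Θ = 4·D₁₁D₂₂ − D₁₂²` as an `S`-linear endomorphism. -/
noncomputable def thetaEnd : Module.End S (MvPolynomial (Fin 4) S) :=
  4 * ((shiftedEuler S 1).toLinearMap * (shiftedEuler S 3).toLinearMap) -
    (shiftedEuler S 2).toLinearMap * (shiftedEuler S 2).toLinearMap

theorem thetaEnd_mem_closure :
    thetaEnd S ∈ Subring.closure (Set.range fun i => (shiftedEuler S i).toLinearMap) := by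
  have hD (i : Fin 4) := Subring.subset_closure (Set.mem_range_self
    (f := fun i => (shiftedEuler S i).toLinearMap) i)
  exact sub_mem (mul_mem (ofNat_mem _ 4) (mul_mem (hD 1) (hD 3))) (mul_mem (hD 2) (hD 2))

theorem coe_thetaEnd :
    ⇑(thetaEnd S) = fun g => 4 * Dij 1 (Dij 3 g) - Dij 2 (Dij 2 g) := by
  ext1 g
  simp [thetaEnd, shiftedEuler, Dij, ofNat_smul_eq_nsmul]

end Theta

/-- Let `p` be an odd prime and `S` a commutative ring of characteristic `p`.  The operator
`Θ := 4·(D₁₁ ∘ D₂₂) − D₁₂ ∘ D₁₂` on `S[T, T₁₁, T₁₂, T₂₂]` satisfies `Θ^p = Θ`. -/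
theorem stmt_16 (p : ℕ) (hp : p.Prime) (hodd : Odd p)
    (S : Type*) [CommRing S] [CharP S p] (f : MvPolynomial (Fin 4) S) :
    (fun g : MvPolynomial (Fin 4) S => 4 * Dij 1 (Dij 3 g) - Dij 2 (Dij 2 g))^[p] f
      = 4 * Dij 1 (Dij 3 f) - Dij 2 (Dij 2 f) := by
  rw [← coe_thetaEnd, ← Module.End.pow_apply, stmt_16_general hp (thetaEnd_mem_closure S),
    coe_thetaEnd]
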